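/- Let 𝐅 = (F_1,…,F_d) be a d-tuple of continuous cdfs on ℝ with F_{i-1} ≥ F_i pointwise for all 2 ≤ i ≤ d, and let C ∈ C^OS(𝐅). Then H(S_𝐅(C)) = log(d!) + H(C) + Σ_{i=1}^d H(δ^𝐅_{(i)}), where δ^𝐅_{(i)} = F_i ∘ G^{-1} and G = (1/d) Σ_{i=1}^d F_i. -/

import Mathlib

/-! Let `X` have marginals `F` and copula `C`, so that `X` is almost surely ordered, and let
`Y_i = G(X_i)`.  Since every marginal of `X_Π` has cdf `G`, the copula `S_F(C)` is the law of
`G(X_Π) = Y_Π`, i.e. the symmetrization of the law `ν` of `Y`.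

The vector `Y` is ordered too.  If `ν` has a density, the vectors with two equal coordinates are
negligible, so that the densities of the permuted copies of `ν` have disjoint supports and their
average is `1 / d!` times the density of `ν` on ordered vectors.  Hence
`H(S_F(C)) = log d! + H(ν)` (`dEntropy_symmetrize`).

The marginals of `ν` are the `δ_(i)`, and `ν` has copula `C` because `δ_(i)(G(t)) = F_i(t)`
(`cdf1_mdiagF`).  By Sklar, the density of `ν` at `y` is that of `C` at `(δ_(i)(y_i))_i` times the
product of the densities of the `δ_(i)` at `y_i`; taking minus the expected logarithm gives
`H(ν) = H(C) + ∑ H(δ_(i))` (`dEntropy_sklar`).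

Entropies are handled in `EReal` as `E_μ[-log f]` (`entL`).  All laws live on the unit cube, and
`-t log t ≤ 1`, so `-log f` has a positive part of finite expectation
(`lintegral_neg_log_ne_top`).  Moreover the `δ_(i)` have densities bounded by `d` (`mdiagF_le`), so
that their entropies are finite.  Therefore no sum of the form `⊤ + ⊥` occurs, and both sides are
`⊥` as soon as `H(C) = ⊥`. -/

/- Formalization framework for "Maximum entropy distribution of order statistics with given
marginals" (Butucea, Delmas, Dutfoy, Fischer).  One-dimensional cdfs are identified with
(probability) measures on `ℝ`, and cdfs on `ℝ^d` with measures on `Fin d → ℝ`. -/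

open MeasureTheory Set
open scoped ENNReal

noncomputable section

namespace MaxEntOS

variable {d : ℕ}

/-- The cumulative distribution function of a measure on `ℝ`. -/
def cdf1 (ν : Measure ℝ) (t : ℝ) : ℝ := (ν (Iic t)).toReal

/-- The cdf extended to `EReal` arguments (so that `cdfE ν ⊥ = 0` and `cdfE ν ⊤ = ν ℝ`). -/
def cdfE (ν : Measure ℝ) (x : EReal) : ℝ := (ν {s : ℝ | (s : EReal) ≤ x}).toReal

/-- The generalized inverse (quantile function) of the cdf of `ν`, real-valued. -/
def qReal (ν : Measure ℝ) (t : ℝ) : ℝ := sInf {s : ℝ | t ≤ cdf1 ν s}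

/-- The generalized inverse of a nondecreasing function `g : ℝ → ℝ`, `EReal`-valued, with the
conventions `inf ∅ = ⊤` and `inf ℝ = ⊥`. -/
def qInvE (g : ℝ → ℝ) (t : ℝ) : EReal := sInf ((fun s : ℝ => (s : EReal)) '' {s : ℝ | t ≤ g s})

open scoped Classical in
/-- The differential entropy (with respect to Lebesgue measure) of a measure, with values in
`EReal` : it equals `⊥` if the measure is not absolutely continuous, and otherwise it is
`−∫ f log f`, computed as the difference of the lower integrals of the negative and positive
parts of `f log f`, where `f` is the density. -/
def dEntropy {α : Type*} [MeasureSpace α] (μ : Measure α) : EReal :=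
  if μ ≪ (volume : Measure α) then
    ((∫⁻ x, ENNReal.ofReal
        (-((μ.rnDeriv volume x).toReal * Real.log ((μ.rnDeriv volume x).toReal))) : ℝ≥0∞) : EReal)
      - ((∫⁻ x, ENNReal.ofReal
        ((μ.rnDeriv volume x).toReal * Real.log ((μ.rnDeriv volume x).toReal)) : ℝ≥0∞) : EReal)
  else ⊥

/-- The nondecreasing rearrangement (order statistics) of a tuple. -/
def orderStat (x : Fin d → ℝ) : Fin d → ℝ := fun i => x (Tuple.sort x i)

/-- The `i`-th one-dimensional marginal of a measure on `ℝ^d`. -/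
def marg (μ : Measure (Fin d → ℝ)) (i : Fin d) : Measure ℝ := μ.map fun x => x i

/-- The multidiagonal of a measure on `ℝ^d` : the tuple of one-dimensional marginals of the
order statistics. -/
def multidiag (μ : Measure (Fin d → ℝ)) (i : Fin d) : Measure ℝ := μ.map fun x => orderStat x i

/-- The uniform distribution on `[0,1]`. -/
def uniform01 : Measure ℝ := (volume : Measure ℝ).restrict (Icc 0 1)

/-- A copula : a probability measure on `ℝ^d` whose one-dimensional marginals are all uniform
on `[0,1]`. -/
def IsCopula (μ : Measure (Fin d → ℝ)) : Prop :=
  IsProbabilityMeasure μ ∧ ∀ i, marg μ i = uniform01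

/-- A measure on `ℝ^d` is symmetric (exchangeable) if it is invariant under permutations of the
coordinates. -/
def IsSymmetric (μ : Measure (Fin d → ℝ)) : Prop :=
  ∀ π : Equiv.Perm (Fin d), μ.map (fun x => fun i => x (π i)) = μ

/-- `δ` belongs to `D` : it is the multidiagonal of some copula. -/
def IsMultidiag (δ : Fin d → Measure ℝ) : Prop :=
  ∃ μ : Measure (Fin d → ℝ), IsCopula μ ∧ multidiag μ = δ

/-- `δ` belongs to `D^0` : it is the multidiagonal of some absolutely continuous copula. -/
def IsMultidiag0 (δ : Fin d → Measure ℝ) : Prop :=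
  ∃ μ : Measure (Fin d → ℝ), IsCopula μ ∧ μ ≪ (volume : Measure (Fin d → ℝ)) ∧ multidiag μ = δ

/-- `F ∈ F_d` : `F` is a `d`-tuple of continuous one-dimensional cdfs (identified with atomless
probability measures on `ℝ`) which are stochastically ordered : `F (i-1) ≥ F i` pointwise. -/
structure IsMargOS [NeZero d] (F : Fin d → Measure ℝ) : Prop where
  prob : ∀ i, IsProbabilityMeasure (F i)
  cont : ∀ i, ∀ t : ℝ, F i {t} = 0
  ord : ∀ i : Fin d, i ≠ 0 → ∀ t : ℝ, cdf1 (F i) t ≤ cdf1 (F (i - 1)) t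

/-- `μ ∈ L^OS_d(F)` : `μ` is the distribution of a `d`-dimensional order statistic (an almost
surely nondecreasing random vector) with one-dimensional marginals `F`. -/
def IsCdfOS (F : Fin d → Measure ℝ) (μ : Measure (Fin d → ℝ)) : Prop :=
  IsProbabilityMeasure μ ∧ μ {x | Monotone x} = 1 ∧ ∀ i, marg μ i = F i

/-- `F ∈ F_d^0` : there exists an absolutely continuous distribution of order statistics with
one-dimensional marginals `F`. -/
def IsMargOS0 [NeZero d] (F : Fin d → Measure ℝ) : Prop :=
  IsMargOS F ∧ ∃ μ : Measure (Fin d → ℝ), IsCdfOS F μ ∧ μ ≪ (volume : Measure (Fin d → ℝ))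

/-- The functional `J(F) = ∑_{i=2}^d ∫ |log (F_{i-1}(t) − F_i(t))| dF_i(t) ∈ [0,∞]`. -/
def Jfun [NeZero d] (F : Fin d → Measure ℝ) : ℝ≥0∞ :=
  ∑ i : Fin d, if i = 0 then 0 else
    ∫⁻ t, ENNReal.ofReal |Real.log (cdf1 (F (i - 1)) t - cdf1 (F i) t)| ∂(F i)

/-- The copula of a measure on `ℝ^d` (for continuous marginals this is the unique copula
provided by Sklar's theorem) : the law of `(F_1(X_1), …, F_d(X_d))`. -/
def copulaOf (μ : Measure (Fin d → ℝ)) : Measure (Fin d → ℝ) :=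
  μ.map fun x => fun i => cdf1 (marg μ i) (x i)

/-- The set `C^{OS}(F)` of copulas of distributions of order statistics with marginal
cdfs `F`. -/
def copulaOS (F : Fin d → Measure ℝ) : Set (Measure (Fin d → ℝ)) :=
  {C | ∃ μ, IsCdfOS F μ ∧ copulaOf μ = C}

/-- The joint distribution with one-dimensional marginals `F` and copula `C` : the law of
`(F_1^{-1}(U_1), …, F_d^{-1}(U_d))` where `U ∼ C`. -/
def joinCopula (F : Fin d → Measure ℝ) (C : Measure (Fin d → ℝ)) : Measure (Fin d → ℝ) :=
  C.map fun u => fun i => qReal (F i) (u i)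

/-- The law of `X_Π`, where `X ∼ μ` and `Π` is an independent uniform random permutation of
`{1, …, d}`. -/
def symmetrize (μ : Measure (Fin d → ℝ)) : Measure (Fin d → ℝ) :=
  (d.factorial : ℝ≥0∞)⁻¹ • ∑ π : Equiv.Perm (Fin d), μ.map (fun x => fun i => x (π i))

/-- The symmetrizing operator `S_F` on copulas : `S_F(C)` is the copula of `X_Π` where `X` has
one-dimensional marginals `F` and copula `C`, and `Π` is an independent uniform random
permutation. -/
def SF (F : Fin d → Measure ℝ) (C : Measure (Fin d → ℝ)) : Measure (Fin d → ℝ) :=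
  copulaOf (symmetrize (joinCopula F C))

/-- The average cdf `G = (1/d) ∑_{i=1}^d F_i`. -/
def Gbar (F : Fin d → Measure ℝ) (t : ℝ) : ℝ := (∑ i, cdf1 (F i) t) / d

/-- `G` extended to `EReal` arguments (`GbarE F ⊥ = 0` and `GbarE F ⊤ = 1` for probability
measures). -/
def GbarE (F : Fin d → Measure ℝ) (x : EReal) : ℝ := (∑ i, cdfE (F i) x) / d

/-- The multidiagonal `δ^F` associated to the marginals `F`, as a tuple of measures : the law
of `G(X_i)` where `X_i ∼ F_i`, whose cdf is `F_i ∘ G^{-1}`. -/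
def mdiagF (F : Fin d → Measure ℝ) (i : Fin d) : Measure ℝ := (F i).map (Gbar F)

/-- `C` is a copula of the measure `ν` on `ℝ^d` : `C` is a copula and `ν` is the joint
distribution with the marginals of `ν` and copula `C`. -/
def IsCopulaOf (C ν : Measure (Fin d → ℝ)) : Prop :=
  IsCopula C ∧ ν = joinCopula (marg ν) C

/-- The extended tuple of multidiagonal cdfs, with the conventions `δ_(0) = 1` and
`δ_(d+1) = 0`; the natural index `i ∈ {1, …, d}` corresponds to `δ_(i)`. -/
def dcdf (δ : Fin d → Measure ℝ) (i : ℕ) (t : ℝ) : ℝ :=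
  if h0 : i = 0 then 1
  else if h : i ≤ d then cdf1 (δ ⟨i - 1, by omega⟩) t
  else 0

/-- The open set `Ψ^δ_i = {t ∈ (0,1) : δ_(i-1)(t) > δ_(i)(t)}`, for `1 ≤ i ≤ d+1`
(with the conventions `δ_(0) = 1` and `δ_(d+1) = 0`). -/
def Psi (δ : Fin d → Measure ℝ) (i : ℕ) : Set ℝ :=
  Ioo 0 1 ∩ {t | dcdf δ i t < dcdf δ (i - 1) t}

/-- Left endpoint of the connected component of `U` containing `t`. -/
def lend (U : Set ℝ) (t : ℝ) : ℝ := sSup {s | s ≤ t ∧ s ∉ U}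

/-- Right endpoint of the connected component of `U` containing `t`. -/
def rend (U : Set ℝ) (t : ℝ) : ℝ := sInf {s | t ≤ s ∧ s ∉ U}

/-- Midpoint `m_i^{(j)}` of the connected component of `U` containing `t`. -/
def midpt (U : Set ℝ) (t : ℝ) : ℝ := (lend U t + rend U t) / 2

/-- The integrand `δ'_(i)(s) / (δ_(i-1)(s) − δ_(i)(s))` (that is, `K'_i`). -/
def kInt (δ : Fin d → Measure ℝ) (i : ℕ) (s : ℝ) : ℝ :=
  deriv (dcdf δ i) s / (dcdf δ (i - 1) s - dcdf δ i s)

/-- `K_i(t)`, integrating `K'_i` from the midpoint of the connected component of `Ψ^δ_i`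
containing `t` (note `K_{d+1} = 0` holds automatically, `δ_(d+1)` being constant). -/
def Kfun (δ : Fin d → Measure ℝ) (i : ℕ) (t : ℝ) : ℝ :=
  ∫ s in (midpt (Psi δ i) t)..t, kInt δ i s

/-- The function `a_i(t) = K'_i(t) e^{K_{i+1}(t) − K_i(t)} 1_{Ψ^δ_i ∩ Ψ^δ_{i+1}}(t)`. -/
def aFun (δ : Fin d → Measure ℝ) (i : ℕ) : ℝ → ℝ :=
  (Psi δ i ∩ Psi δ (i + 1)).indicator fun t =>
    kInt δ i t * Real.exp (Kfun δ (i + 1) t - Kfun δ i t)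

/-- The set `L_δ` of `u ∈ [0,1]^d` such that `(u_(i-1), u_(i)) ⊆ Ψ^δ_i` for all `2 ≤ i ≤ d`. -/
def Lset [NeZero d] (δ : Fin d → Measure ℝ) : Set (Fin d → ℝ) :=
  {u | (∀ j, u j ∈ Icc (0 : ℝ) 1) ∧
    ∀ i : Fin d, i ≠ 0 → Ioo (orderStat u (i - 1)) (orderStat u i) ⊆ Psi δ (i.val + 1)}

/-- The density `c_δ(u) = (1/d!) 1_{L_δ}(u) ∏_{i=1}^d a_i(u_(i))` of the maximum entropy copula
with multidiagonal `δ`. -/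
def cDelta [NeZero d] (δ : Fin d → Measure ℝ) : (Fin d → ℝ) → ℝ :=
  (Lset δ).indicator fun u =>
    (d.factorial : ℝ)⁻¹ * ∏ i : Fin d, aFun δ (i.val + 1) (orderStat u i)

/-- The maximum entropy copula `C_δ` with multidiagonal `δ` : the measure with density `c_δ`. -/
def CDelta [NeZero d] (δ : Fin d → Measure ℝ) : Measure (Fin d → ℝ) :=
  (volume : Measure (Fin d → ℝ)).withDensity fun u => ENNReal.ofReal (cDelta δ u)

/-- The density of a one-dimensional measure `ν` with respect to Lebesgue measure. -/
def densOf (ν : Measure ℝ) (t : ℝ) : ℝ := (ν.rnDeriv volume t).toReal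

/-- The function `ℓ_i(t) = f_i(t) / (F_{i-1}(t) − F_i(t))`. -/
def ellF [NeZero d] (F : Fin d → Measure ℝ) (i : Fin d) (t : ℝ) : ℝ :=
  densOf (F i) t / (cdf1 (F (i - 1)) t - cdf1 (F i) t)

/-- The set `L^F` of ordered vectors `x ∈ ℝ^d` such that `F_{i-1}(t) > F_i(t)` for all
`t ∈ (x_{i-1}, x_i)` and all `2 ≤ i ≤ d`. -/
def LsetF [NeZero d] (F : Fin d → Measure ℝ) : Set (Fin d → ℝ) :=
  {x | Monotone x ∧ ∀ i : Fin d, i ≠ 0 →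
    ∀ t ∈ Ioo (x (i - 1)) (x i), cdf1 (F i) t < cdf1 (F (i - 1)) t}

/-- The density `f_F` of the maximum entropy distribution of order statistics with marginal
cdfs `F` :
`f_F(x) = f_1(x_1) ∏_{i=2}^d ℓ_i(x_i) exp(−∫_{x_{i-1}}^{x_i} ℓ_i(s) ds) 1_{L^F}(x)`. -/
def fF [NeZero d] (F : Fin d → Measure ℝ) : (Fin d → ℝ) → ℝ :=
  (LsetF F).indicator fun x =>
    densOf (F 0) (x 0) *
      ∏ i ∈ Finset.univ.erase (0 : Fin d),
        ellF F i (x i) * Real.exp (-∫ s in (x (i - 1))..(x i), ellF F i s)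

open Filter Topology

/-! ### Cdfs and quantile functions on the line -/

lemma ofReal_cdf1 (ν : Measure ℝ) [IsFiniteMeasure ν] (x : ℝ) :
    ENNReal.ofReal (cdf1 ν x) = ν (Iic x) :=
  ENNReal.ofReal_toReal (measure_ne_top _ _)

lemma cdf1_mono (ν : Measure ℝ) [IsFiniteMeasure ν] : Monotone (cdf1 ν) := fun _ _ h =>
  ENNReal.toReal_mono (measure_ne_top _ _) (measure_mono (Iic_subset_Iic.2 h))

lemma measurable_cdf1 (ν : Measure ℝ) [IsFiniteMeasure ν] : Measurable (cdf1 ν) :=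
  (cdf1_mono ν).measurable

lemma cdf1_eq_cdf (ν : Measure ℝ) [IsProbabilityMeasure ν] (x : ℝ) :
    cdf1 ν x = ProbabilityTheory.cdf ν x := by
  rw [ProbabilityTheory.cdf_eq_real]; rfl

lemma cdf1_nonneg (ν : Measure ℝ) (x : ℝ) : 0 ≤ cdf1 ν x := ENNReal.toReal_nonneg

lemma cdf1_le_one (ν : Measure ℝ) [IsProbabilityMeasure ν] (x : ℝ) : cdf1 ν x ≤ 1 := by
  rw [cdf1_eq_cdf]; exact ProbabilityTheory.cdf_le_one _ _

lemma continuous_cdf1 (ν : Measure ℝ) [IsProbabilityMeasure ν] (h : ∀ t, ν {t} = 0) :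
    Continuous (cdf1 ν) := by
  have e : cdf1 ν = ProbabilityTheory.cdf ν := funext (cdf1_eq_cdf ν)
  rw [e, continuous_iff_continuousAt]
  intro x
  rw [(ProbabilityTheory.monotone_cdf ν).continuousAt_iff_leftLim_eq_rightLim,
    StieltjesFunction.rightLim_eq]
  have h1 := (ProbabilityTheory.cdf ν).measure_singleton x
  rw [ProbabilityTheory.measure_cdf, h x, eq_comm, ENNReal.ofReal_eq_zero] at h1
  exact le_antisymm ((ProbabilityTheory.monotone_cdf ν).leftLim_le le_rfl) (by linarith)

/-- Probability integral transform. -/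
lemma map_cdf1 (ν : Measure ℝ) [IsProbabilityMeasure ν] (h : ∀ t, ν {t} = 0) :
    ν.map (cdf1 ν) = uniform01 := by
  refine Measure.ext_of_Iic _ _ fun a => ?_
  rw [Measure.map_apply (measurable_cdf1 ν) measurableSet_Iic, uniform01,
    Measure.restrict_apply measurableSet_Iic]
  have e : Iic a ∩ Icc (0 : ℝ) 1 = Icc 0 (min a 1) := by ext; simp; tauto
  rw [e, Real.volume_Icc, sub_zero]
  have top := ProbabilityTheory.tendsto_cdf_atTop ν
  have bot := ProbabilityTheory.tendsto_cdf_atBot ν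
  rw [← funext (cdf1_eq_cdf ν)] at top bot
  have hc := continuous_cdf1 ν h
  rcases le_or_gt 1 a with ha | ha
  · have : cdf1 ν ⁻¹' Iic a = univ := by
      ext x; simpa using (cdf1_le_one ν x).trans ha
    rw [this, min_eq_right ha]; simp
  · rw [min_eq_left ha.le]
    rcases (cdf1 ν ⁻¹' Iic a).eq_empty_or_nonempty with h0 | ⟨x, hx⟩
    · have : a ≤ 0 := by
        refine ge_of_tendsto' bot fun x => ?_
        by_contra hlt
        have : x ∈ cdf1 ν ⁻¹' Iic a := (not_le.1 hlt).le
        rw [h0] at this; exact this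
      rw [h0, ENNReal.ofReal_of_nonpos this]; simp
    · obtain ⟨z, hz⟩ := ((tendsto_order.1 top).1 a ha).exists
      have hbdd : BddAbove (cdf1 ν ⁻¹' Iic a) :=
        ⟨z, fun y hy => le_of_not_gt fun hlt => absurd (cdf1_mono ν hlt.le)
          (not_le.2 (lt_of_le_of_lt hy hz))⟩
      have hcl : IsClosed (cdf1 ν ⁻¹' Iic a) := isClosed_Iic.preimage hc
      have hmem := hcl.csSup_mem ⟨x, hx⟩ hbdd
      set m := sSup (cdf1 ν ⁻¹' Iic a)
      have hset : cdf1 ν ⁻¹' Iic a = Iic m :=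
        Subset.antisymm (fun y hy => le_csSup hbdd hy)
          fun y hy => (cdf1_mono ν hy).trans hmem
      obtain ⟨y, hy⟩ := mem_range_of_exists_le_of_exists_ge hc ⟨x, hx⟩ ⟨z, hz.le⟩
      have hm : cdf1 ν m = a :=
        le_antisymm hmem (hy.symm.le.trans (cdf1_mono ν (le_csSup hbdd hy.le)))
      rw [hset, ← ofReal_cdf1, hm]

lemma uniform01_singleton (t : ℝ) : uniform01 {t} = 0 :=
  le_antisymm ((Measure.restrict_apply_le _ _).trans (by simp)) bot_le

lemma ae_cdf1_ne (ν : Measure ℝ) [IsProbabilityMeasure ν] (h : ∀ t, ν {t} = 0) (t : ℝ) :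
    ∀ᵐ x ∂ν, cdf1 ν x ≠ t := by
  have h1 := uniform01_singleton t
  rw [← map_cdf1 ν h, Measure.map_apply (measurable_cdf1 ν) (measurableSet_singleton t)] at h1
  exact measure_eq_zero_iff_ae_notMem.1 h1

/-- The quantile function is almost surely a left inverse of the cdf: almost surely `x` is not in
a flat piece of the cdf, since each flat piece contains a rational. -/
lemma ae_qReal_cdf1 (ν : Measure ℝ) [IsProbabilityMeasure ν] (h : ∀ t, ν {t} = 0) :
    ∀ᵐ x ∂ν, qReal ν (cdf1 ν x) = x := by
  have h1 : ∀ᵐ x ∂ν, ∀ r : ℚ, cdf1 ν x ≠ cdf1 ν r := ae_all_iff.2 fun r => ae_cdf1_ne ν h _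
  filter_upwards [h1] with x hx
  have : {s : ℝ | cdf1 ν x ≤ cdf1 ν s} = Ici x := by
    refine Subset.antisymm (fun s hs => ?_) fun s hs => cdf1_mono ν hs
    by_contra hlt
    obtain ⟨r, hr1, hr2⟩ := exists_rat_btwn (lt_of_not_ge fun hge : x ≤ s => hlt hge)
    exact hx r (le_antisymm (le_trans hs (cdf1_mono ν hr1.le)) (cdf1_mono ν hr2.le))
  rw [qReal, this, csInf_Ici]

lemma aemeasurable_qReal (ν : Measure ℝ) [IsProbabilityMeasure ν] :
    AEMeasurable (qReal ν) uniform01 := by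
  have e : uniform01 = (volume : Measure ℝ).restrict (Ioo 0 1) :=
    (Measure.restrict_congr_set Ioo_ae_eq_Icc).symm
  rw [e]
  refine aemeasurable_restrict_of_monotoneOn measurableSet_Ioo ?_
  have top := ProbabilityTheory.tendsto_cdf_atTop ν
  have bot := ProbabilityTheory.tendsto_cdf_atBot ν
  rw [← funext (cdf1_eq_cdf ν)] at top bot
  intro s hs t ht hst
  refine csInf_le_csInf ?_ ?_ fun x hx => le_trans hst hx
  · obtain ⟨z, hz⟩ := ((tendsto_order.1 bot).2 s hs.1).exists
    exact ⟨z, fun y hy => le_of_not_gt fun hlt =>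
      absurd (cdf1_mono ν hlt.le) (not_le.2 (lt_of_lt_of_le hz hy))⟩
  · obtain ⟨z, hz⟩ := ((tendsto_order.1 top).1 t ht.2).exists
    exact ⟨z, hz.le⟩

instance : IsProbabilityMeasure uniform01 := ⟨by simp [uniform01]⟩

/-! ### Entropy as an expectation -/

/-- The extended expectation `E_μ[-L]`, meant for `L` the logarithm of a density of `μ`.  The
positive and negative parts are integrated separately; when both integrals are infinite the value
is `⊤ - ⊤ = ⊥`. -/
def entL {α : Type*} [MeasurableSpace α] (μ : Measure α) (L : α → ℝ) : EReal :=
  ((∫⁻ x, ENNReal.ofReal (-L x) ∂μ : ℝ≥0∞) : EReal)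
    - ((∫⁻ x, ENNReal.ofReal (L x) ∂μ : ℝ≥0∞) : EReal)

section
variable {α β : Type*} [MeasurableSpace α] [MeasurableSpace β]

lemma entL_congr {μ : Measure α} {L M : α → ℝ} (h : L =ᵐ[μ] M) : entL μ L = entL μ M := by
  unfold entL
  rw [lintegral_congr_ae (h.mono fun x hx => by simp only [hx] :
      (fun x => ENNReal.ofReal (-L x)) =ᵐ[μ] fun x => ENNReal.ofReal (-M x)),
    lintegral_congr_ae (h.mono fun x hx => by simp only [hx] :
      (fun x => ENNReal.ofReal (L x)) =ᵐ[μ] fun x => ENNReal.ofReal (M x))]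

lemma entL_map {μ : Measure α} {f : α → β} (hf : Measurable f) {L : β → ℝ} (hL : Measurable L) :
    entL (μ.map f) L = entL μ (L ∘ f) := by
  unfold entL
  rw [lintegral_map (by fun_prop) hf, lintegral_map (by fun_prop) hf]
  rfl

lemma entL_of_integrable {μ : Measure α} {L : α → ℝ} (hL : Integrable L μ) :
    entL μ L = ((-∫ x, L x ∂μ : ℝ) : EReal) := by
  have h1 : ∫⁻ x, ENNReal.ofReal (L x) ∂μ ≠ ⊤ := hL.lintegral_lt_top.ne
  have h2 : ∫⁻ x, ENNReal.ofReal (-L x) ∂μ ≠ ⊤ := hL.neg.lintegral_lt_top.ne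
  rw [integral_eq_lintegral_pos_part_sub_lintegral_neg_part hL, entL, neg_sub, EReal.coe_sub,
    EReal.coe_ennreal_toReal h1, EReal.coe_ennreal_toReal h2]

lemma entL_eq_bot {μ : Measure α} {L : α → ℝ} (h : ∫⁻ x, ENNReal.ofReal (L x) ∂μ = ⊤) :
    entL μ L = ⊥ := by
  rw [entL, h, EReal.coe_ennreal_top, sub_eq_add_neg, EReal.neg_top, EReal.add_bot]

lemma integrable_of_lintegral {μ : Measure α} {L : α → ℝ} (hL : Measurable L)
    (h1 : ∫⁻ x, ENNReal.ofReal (L x) ∂μ ≠ ⊤) (h2 : ∫⁻ x, ENNReal.ofReal (-L x) ∂μ ≠ ⊤) :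
    Integrable L μ := by
  refine ⟨hL.aestronglyMeasurable, ?_⟩
  rw [hasFiniteIntegral_iff_norm]
  calc ∫⁻ x, ENNReal.ofReal ‖L x‖ ∂μ
      ≤ ∫⁻ x, (ENNReal.ofReal (L x) + ENNReal.ofReal (-L x)) ∂μ := by
        refine lintegral_mono fun x => ?_
        rcases le_total 0 (L x) with h | h
        · rw [Real.norm_of_nonneg h]; exact le_self_add
        · rw [Real.norm_of_nonpos h]; exact le_add_self
    _ = _ := lintegral_add_left (by fun_prop) _
    _ < ⊤ := ENNReal.add_lt_top.2 ⟨h1.lt_top, h2.lt_top⟩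

/-- Additivity, including the case where the positive part of `L` has infinite integral and both
sides are `⊥`. -/
lemma entL_add {μ : Measure α} {L M : α → ℝ} (hL : Measurable L) (hM : Integrable M μ)
    (h2 : ∫⁻ x, ENNReal.ofReal (-L x) ∂μ ≠ ⊤) :
    entL μ (fun x => L x + M x) = entL μ L + entL μ M := by
  by_cases h1 : ∫⁻ x, ENNReal.ofReal (L x) ∂μ = ⊤
  · have h3 : ∫⁻ x, ENNReal.ofReal (L x + M x) ∂μ = ⊤ := by
      by_contra h3
      have h4 : ∫⁻ x, ENNReal.ofReal (L x) ∂μ ≤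
          ∫⁻ x, ENNReal.ofReal (L x + M x) ∂μ + ∫⁻ x, ENNReal.ofReal (-M x) ∂μ := by
        refine (lintegral_mono fun x => ?_).trans_eq
          (lintegral_add_right' _ hM.aestronglyMeasurable.aemeasurable.neg.ennreal_ofReal)
        refine le_trans (le_of_eq ?_) ENNReal.ofReal_add_le
        congr 1; ring
      rw [h1, top_le_iff, ENNReal.add_eq_top] at h4
      exact h4.elim h3 hM.neg.lintegral_lt_top.ne
    rw [entL_eq_bot h1, entL_eq_bot h3, EReal.bot_add]
  · have hL' := integrable_of_lintegral hL h1 h2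
    rw [entL_of_integrable hL', entL_of_integrable hM,
      entL_of_integrable (L := fun x => L x + M x) (hL'.add hM),
      integral_add hL' hM, ← EReal.coe_add]
    congr 1; ring

lemma ae_withDensity_ne_zero (μ : Measure α) {f : α → ℝ≥0∞} (hf : Measurable f) :
    ∀ᵐ x ∂μ.withDensity f, f x ≠ 0 := by
  rw [ae_withDensity_iff hf]
  exact ae_of_all _ fun x hx => hx

lemma ae_withDensity_ne_top (μ : Measure α) {f : α → ℝ≥0∞} (hf : Measurable f)
    [IsFiniteMeasure (μ.withDensity f)] : ∀ᵐ x ∂μ, f x ≠ ⊤ := by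
  refine (ae_lt_top hf ?_).mono fun x hx => hx.ne
  have := measure_ne_top (μ.withDensity f) univ
  rwa [withDensity_apply _ MeasurableSet.univ, setLIntegral_univ] at this

lemma ofReal_toReal_mul {a : ℝ≥0∞} (ha : a ≠ ⊤) (b : ℝ) :
    ENNReal.ofReal (a.toReal * b) = a * ENNReal.ofReal b := by
  rw [ENNReal.ofReal_mul ENNReal.toReal_nonneg, ENNReal.ofReal_toReal ha]

/-- A density supported in a set of finite measure has a negative log-part of finite integral,
since `-t log t ≤ 1`. -/
lemma lintegral_neg_log_ne_top {μ : Measure α} {f : α → ℝ≥0∞} (hf : Measurable f)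
    [IsFiniteMeasure (μ.withDensity f)] {K : Set α} (hK : MeasurableSet K) (hKμ : μ K ≠ ⊤)
    (h0 : μ.withDensity f Kᶜ = 0) :
    ∫⁻ x, ENNReal.ofReal (-Real.log (f x).toReal) ∂μ.withDensity f ≠ ⊤ := by
  have e : μ.withDensity f = (μ.restrict K).withDensity f := by
    rw [← restrict_withDensity hK, Measure.restrict_eq_self_of_ae_mem]
    exact h0
  have hft := ae_restrict_of_ae (s := K) (ae_withDensity_ne_top μ hf)
  rw [e, lintegral_withDensity_eq_lintegral_mul _ hf (by fun_prop)]
  refine ne_top_of_le_ne_top hKμ ?_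
  calc _ ≤ ∫⁻ x in K, 1 ∂μ := by
        refine lintegral_mono_ae (hft.mono fun x hx => ?_)
        rw [Pi.mul_apply, ← ofReal_toReal_mul hx, ← ENNReal.ofReal_one]
        refine ENNReal.ofReal_le_ofReal ?_
        rcases (ENNReal.toReal_nonneg (a := f x)).eq_or_lt with h | h
        · rw [← h]; simp
        · have h1 := Real.one_sub_inv_le_log_of_pos h
          have h2 : (f x).toReal * (f x).toReal⁻¹ = 1 := mul_inv_cancel₀ h.ne'
          nlinarith
    _ = μ K := by simp

end

/-- The entropy of a measure with density `f` is the expectation of `-log f` under that measure,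
which turns additivity of logarithms into additivity of entropies. -/
lemma dEntropy_withDensity {α : Type*} [MeasureSpace α] [SigmaFinite (volume : Measure α)]
    {f : α → ℝ≥0∞} (hf : Measurable f) [IsFiniteMeasure ((volume : Measure α).withDensity f)] :
    dEntropy ((volume : Measure α).withDensity f) =
      entL ((volume : Measure α).withDensity f) fun x => Real.log (f x).toReal := by
  rw [dEntropy, if_pos (withDensity_absolutelyContinuous _ _), entL,
    lintegral_withDensity_eq_lintegral_mul _ hf (by fun_prop),
    lintegral_withDensity_eq_lintegral_mul _ hf (by fun_prop)]
  have h1 := Measure.rnDeriv_withDensity (volume : Measure α) hf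
  have h2 := ae_withDensity_ne_top (volume : Measure α) hf
  congr 2
  · refine lintegral_congr_ae ?_
    filter_upwards [h1, h2] with x hx hx2
    rw [hx, Pi.mul_apply, ← ofReal_toReal_mul hx2, mul_neg]
  · refine lintegral_congr_ae ?_
    filter_upwards [h1, h2] with x hx hx2
    rw [hx, Pi.mul_apply, ← ofReal_toReal_mul hx2]

lemma dEntropy_of_not_ac {α : Type*} [MeasureSpace α] {μ : Measure α}
    (h : ¬ μ ≪ (volume : Measure α)) : dEntropy μ = ⊥ := if_neg h

lemma lintegral_pi_prod (n : ℕ) (μ : Fin n → Measure ℝ) [∀ i, SigmaFinite (μ i)]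
    (f : Fin n → ℝ → ℝ≥0∞) (hf : ∀ i, Measurable (f i)) :
    ∫⁻ x, ∏ i, f i (x i) ∂Measure.pi μ = ∏ i, ∫⁻ t, f i t ∂μ i := by
  induction n with
  | zero => simp
  | succ n ih =>
    rw [← ((measurePreserving_piFinSuccAbove μ 0).symm _).lintegral_comp (by fun_prop)]
    simp_rw [MeasurableEquiv.piFinSuccAbove_symm_apply, Fin.insertNthEquiv,
      Fin.prod_univ_succ, Fin.insertNth_zero, Equiv.coe_fn_mk, Fin.cons_succ,
      Fin.zero_succAbove, cast_eq, Fin.cons_zero]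
    rw [lintegral_prod_mul (g := fun y : Fin n → ℝ => ∏ x : Fin n, f x.succ (y x))
      (hf 0).aemeasurable (Measurable.aemeasurable (by fun_prop))]
    congr 1
    exact ih _ _ fun i => hf _

lemma pi_withDensity (n : ℕ) (μ : Fin n → Measure ℝ) [∀ i, SigmaFinite (μ i)]
    (f : Fin n → ℝ → ℝ≥0∞) (hf : ∀ i, Measurable (f i))
    [∀ i, SigmaFinite ((μ i).withDensity (f i))] :
    Measure.pi (fun i => (μ i).withDensity (f i)) =
      (Measure.pi μ).withDensity fun x => ∏ i, f i (x i) := by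
  refine Measure.pi_eq fun s hs => ?_
  rw [withDensity_apply _ (.univ_pi hs), ← lintegral_indicator (.univ_pi hs)]
  have : (univ.pi s).indicator (fun x : Fin n → ℝ => ∏ i, f i (x i)) =
      fun x => ∏ i, (s i).indicator (f i) (x i) := by
    ext x
    by_cases hx : x ∈ univ.pi s
    · rw [indicator_of_mem hx]
      exact Finset.prod_congr rfl fun i _ => (indicator_of_mem (hx i trivial) _).symm
    · rw [indicator_of_notMem hx]
      simp only [mem_univ_pi, not_forall] at hx
      obtain ⟨i, hi⟩ := hx
      exact (Finset.prod_eq_zero (Finset.mem_univ i) (indicator_of_notMem hi _)).symm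
  rw [this, lintegral_pi_prod n μ _ fun i => (hf i).indicator (hs i)]
  exact Finset.prod_congr rfl fun i _ => by
    rw [lintegral_indicator (hs i), withDensity_apply _ (hs i)]

/-! ### Entropy and copulas -/

lemma measurable_cdfs (F : Fin d → Measure ℝ) [∀ i, IsProbabilityMeasure (F i)] :
    Measurable fun (x : Fin d → ℝ) i => cdf1 (F i) (x i) :=
  measurable_pi_lambda _ fun i => (measurable_cdf1 (F i)).comp (measurable_pi_apply i)

lemma marg_map (f : Fin d → ℝ → ℝ) (hf : ∀ i, Measurable (f i)) (ν : Measure (Fin d → ℝ))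
    (i : Fin d) : marg (ν.map fun x i => f i (x i)) i = (marg ν i).map (f i) := by
  unfold marg
  rw [Measure.map_map (by fun_prop) (by fun_prop), Measure.map_map (hf i) (by fun_prop)]
  rfl

/-- Transforming by the cdfs and then by the quantile functions gives back the measure.  Only
absolute continuity of the marginals is asked for, so that the lemma also shows that the map by the
cdfs is injective on the measures concerned. -/
lemma joinCopula_map (F : Fin d → Measure ℝ) [∀ i, IsProbabilityMeasure (F i)]
    (hat : ∀ i t, F i {t} = 0) (ν : Measure (Fin d → ℝ)) (hm : ∀ i, marg ν i ≪ F i) :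
    joinCopula F (ν.map fun x i => cdf1 (F i) (x i)) = ν := by
  have hQ : AEMeasurable (fun (u : Fin d → ℝ) i => qReal (F i) (u i))
      (ν.map fun x i => cdf1 (F i) (x i)) := by
    refine aemeasurable_pi_lambda _ fun i => ?_
    refine AEMeasurable.comp_aemeasurable (g := qReal (F i)) (f := fun u : Fin d → ℝ => u i)
      ?_ (measurable_pi_apply i).aemeasurable
    refine (aemeasurable_qReal (F i)).mono_ac ?_
    change marg (ν.map fun x i => cdf1 (F i) (x i)) i ≪ uniform01
    rw [marg_map (fun i => cdf1 (F i)) (fun i => measurable_cdf1 _), ← map_cdf1 (F i) (hat i)]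
    exact (hm i).map (measurable_cdf1 _)
  have hae : ∀ᵐ y ∂ν, ∀ i, qReal (F i) (cdf1 (F i) (y i)) = y i :=
    ae_all_iff.2 fun i => ae_of_ae_map (measurable_pi_apply i).aemeasurable
      ((hm i).ae_le (ae_qReal_cdf1 (F i) (hat i)))
  rw [joinCopula, AEMeasurable.map_map_of_aemeasurable hQ (measurable_cdfs F).aemeasurable]
  refine (Measure.map_congr ?_).trans Measure.map_id
  filter_upwards [hae] with y hy
  exact funext hy

lemma map_withDensity_comp {α β : Type*} [MeasurableSpace α] [MeasurableSpace β]
    (μ : Measure α) {f : α → β} (hf : Measurable f) {c : β → ℝ≥0∞} (hc : Measurable c) :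
    (μ.withDensity (c ∘ f)).map f = (μ.map f).withDensity c := by
  ext s hs
  rw [Measure.map_apply hf hs, withDensity_apply _ (hf hs), withDensity_apply _ hs,
    setLIntegral_map hs hc hf]
  rfl

lemma pi_uniform01 : Measure.pi (fun _ : Fin d => uniform01) =
    (volume : Measure (Fin d → ℝ)).restrict (univ.pi fun _ => Icc 0 1) := by
  unfold uniform01
  rw [volume_pi, Measure.restrict_pi_pi]

lemma measurableSet_cube : MeasurableSet (univ.pi fun _ : Fin d => Icc (0 : ℝ) 1) :=
  .univ_pi fun _ => measurableSet_Icc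

lemma volume_cube_ne_top :
    (volume : Measure (Fin d → ℝ)) (univ.pi fun _ => Icc (0 : ℝ) 1) ≠ ⊤ := by
  rw [volume_pi_pi]; simp

/-- A measure whose marginals live on `[0,1]` lives on the cube. -/
lemma cube_compl_null (ν : Measure (Fin d → ℝ)) (h : ∀ i, marg ν i (Icc 0 1)ᶜ = 0) :
    ν (univ.pi fun _ : Fin d => Icc (0 : ℝ) 1)ᶜ = 0 := by
  have h1 : ∀ᵐ y ∂ν, ∀ i, y i ∈ Icc (0 : ℝ) 1 := ae_all_iff.2 fun i =>
    ae_of_ae_map (measurable_pi_apply i).aemeasurable (h i)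
  exact (h1.mono fun y hy i _ => hy i : ∀ᵐ y ∂ν, y ∈ univ.pi fun _ : Fin d => Icc (0 : ℝ) 1)

lemma uniform01_compl : uniform01 (Icc 0 1)ᶜ = 0 := by
  rw [uniform01, Measure.restrict_apply measurableSet_Icc.compl]; simp

lemma toReal_log_prod_mul {ι : Type*} [Fintype ι] (a : ι → ℝ≥0∞) (b : ℝ≥0∞) (ha : ∀ i, a i ≠ 0)
    (ha' : ∀ i, a i ≠ ⊤) (hb : b ≠ 0) (hb' : b ≠ ⊤) :
    Real.log ((∏ i, a i) * b).toReal = Real.log b.toReal + ∑ i, Real.log (a i).toReal := by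
  rw [ENNReal.toReal_mul, ENNReal.toReal_prod, mul_comm, Real.log_mul, Real.log_prod]
  · exact fun i _ => (ENNReal.toReal_pos (ha i) (ha' i)).ne'
  · exact (ENNReal.toReal_pos hb hb').ne'
  · exact Finset.prod_ne_zero_iff.2 fun i _ => (ENNReal.toReal_pos (ha i) (ha' i)).ne'

lemma entL_sum {α ι : Type*} [MeasurableSpace α] {μ : Measure α} (s : Finset ι) (L : ι → α → ℝ)
    (hL : ∀ i, Integrable (L i) μ) :
    entL μ (fun x => ∑ i ∈ s, L i x) = ∑ i ∈ s, entL μ (L i) := by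
  rw [entL_of_integrable (integrable_finsetSum s fun i _ => hL i),
    integral_finsetSum s fun i _ => hL i]
  simp_rw [entL_of_integrable (hL _)]
  rw [← Finset.sum_neg_distrib]
  exact map_sum (⟨⟨((↑) : ℝ → EReal), EReal.coe_zero⟩, EReal.coe_add⟩ : ℝ →+ EReal) _ _

/-- Sklar decomposition of the entropy: entropy of the copula plus entropies of the marginals,
provided that the latter are finite.  The density of `ν` at `y` is the product of the marginal
densities `h i (y i)` and of the copula density at the point with coordinates
`cdf1 (δ i) (y i)`. -/
lemma dEntropy_sklar (δ : Fin d → Measure ℝ) [∀ i, IsProbabilityMeasure (δ i)]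
    (h : Fin d → ℝ → ℝ≥0∞) (hh : ∀ i, Measurable (h i))
    (hδ : ∀ i, δ i = (volume : Measure ℝ).withDensity (h i))
    (hLogInt : ∀ i, Integrable (fun t => Real.log (h i t).toReal) (δ i))
    (ν : Measure (Fin d → ℝ)) [IsProbabilityMeasure ν] (hν : ∀ i, marg ν i = δ i) :
    dEntropy ν = dEntropy (copulaOf ν) + ∑ i, dEntropy (δ i) := by
  have hat : ∀ i t, δ i {t} = 0 := fun i t => by
    rw [hδ i]; exact withDensity_absolutelyContinuous _ _ (by simp)
  have hfin : ∀ i, IsFiniteMeasure ((volume : Measure ℝ).withDensity (h i)) :=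
    fun i => by rw [← hδ i]; infer_instance
  have hD := measurable_cdfs δ
  set D := fun (x : Fin d → ℝ) i => cdf1 (δ i) (x i) with hDdef
  have hCm : copulaOf ν = ν.map D := by
    unfold copulaOf; simp_rw [hν]; rfl
  have hpiD : (Measure.pi δ).map D = Measure.pi fun _ => uniform01 := by
    have : ∀ i, IsProbabilityMeasure ((δ i).map (cdf1 (δ i))) := fun i => by
      rw [map_cdf1 _ (hat i)]; infer_instance
    rw [hDdef, Measure.pi_map_pi fun i => (measurable_cdf1 (δ i)).aemeasurable]
    congr 1; ext1 i; exact map_cdf1 _ (hat i)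
  have hpi : Measure.pi δ = (volume : Measure (Fin d → ℝ)).withDensity
      fun x => ∏ i, h i (x i) := by
    rw [volume_pi, ← pi_withDensity d (fun _ => volume) h hh]
    congr 1; ext1 i; exact hδ i
  have hp : Measurable fun x : Fin d → ℝ => ∏ i, h i (x i) := by fun_prop
  have hne0 : ∀ᵐ y ∂ν, ∀ i, h i (y i) ≠ 0 := ae_all_iff.2 fun i =>
    ae_of_ae_map (measurable_pi_apply i).aemeasurable (by
      change ∀ᵐ t ∂marg ν i, h i t ≠ 0
      rw [hν i, hδ i]; exact ae_withDensity_ne_zero _ (hh i))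
  have hnetop : ∀ᵐ y ∂ν, ∀ i, h i (y i) ≠ ⊤ := ae_all_iff.2 fun i =>
    ae_of_ae_map (measurable_pi_apply i).aemeasurable (by
      change ∀ᵐ t ∂marg ν i, h i t ≠ ⊤
      rw [hν i, hδ i]
      exact (withDensity_absolutelyContinuous _ _).ae_le (ae_withDensity_ne_top _ (hh i)))
  by_cases hC : copulaOf ν ≪ (volume : Measure (Fin d → ℝ))
  · have hCprob : IsProbabilityMeasure (copulaOf ν) := by
      rw [hCm]; exact Measure.isProbabilityMeasure_map hD.aemeasurable
    have hCmarg : ∀ i, marg (copulaOf ν) i = uniform01 := fun i => by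
      rw [hCm, marg_map (fun i => cdf1 (δ i)) (fun i => measurable_cdf1 _), hν i,
        map_cdf1 _ (hat i)]
    have hCcube := cube_compl_null (copulaOf ν) fun i => by rw [hCmarg i, uniform01_compl]
    set c := (copulaOf ν).rnDeriv volume with hcdef
    have hc : Measurable c := Measure.measurable_rnDeriv _ _
    have hCc : (volume : Measure (Fin d → ℝ)).withDensity c = copulaOf ν :=
      Measure.withDensity_rnDeriv_eq _ _ hC
    have hCcube_density : (Measure.pi fun _ => uniform01).withDensity c = copulaOf ν := by
      rw [pi_uniform01, ← restrict_withDensity measurableSet_cube, hCc]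
      exact Measure.restrict_eq_self_of_ae_mem hCcube
    have hmap : ((Measure.pi δ).withDensity (c ∘ D)).map D = copulaOf ν := by
      rw [map_withDensity_comp _ hD hc, hpiD, hCcube_density]
    -- Both measures have the same image under the almost surely injective map `D`.
    have hνeq : (Measure.pi δ).withDensity (c ∘ D) = ν := by
      rw [← joinCopula_map δ hat ((Measure.pi δ).withDensity (c ∘ D)) fun i =>
        ((withDensity_absolutelyContinuous _ _).map (measurable_pi_apply i)).trans
          (Measure.quasiMeasurePreserving_eval δ i).absolutelyContinuous,
        hmap, hCm]
      exact joinCopula_map δ hat ν fun i => (hν i).absolutelyContinuous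
    have hνd : (volume : Measure (Fin d → ℝ)).withDensity
        (fun x => (∏ i, h i (x i)) * c (D x)) = ν := by
      rw [← hνeq, hpi, ← withDensity_mul _ hp (hc.comp hD)]
      rfl
    have hcD : ∀ᵐ y ∂ν, c (D y) ≠ 0 ∧ c (D y) ≠ ⊤ := by
      refine ae_of_ae_map hD.aemeasurable (p := fun u => c u ≠ 0 ∧ c u ≠ ⊤) ?_
      rw [← hCm, ← hCc]
      have : IsFiniteMeasure ((volume : Measure (Fin d → ℝ)).withDensity c) := by
        rw [hCc]; infer_instance
      exact (ae_withDensity_ne_zero _ hc).and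
        ((withDensity_absolutelyContinuous _ _).ae_le (ae_withDensity_ne_top _ hc))
    have hLm : Measurable fun u => Real.log (c u).toReal := by fun_prop
    have h1 : dEntropy ν = entL ν fun x => Real.log ((∏ i, h i (x i)) * c (D x)).toReal := by
      have : IsFiniteMeasure ((volume : Measure (Fin d → ℝ)).withDensity
        (fun x => (∏ i, h i (x i)) * c (D x))) := by rw [hνd]; infer_instance
      have := dEntropy_withDensity (α := Fin d → ℝ)
        (f := fun x => (∏ i, h i (x i)) * c (D x)) (hp.mul (hc.comp hD))
      rwa [hνd] at this
    have hCfin : IsFiniteMeasure ((volume : Measure (Fin d → ℝ)).withDensity c) := by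
      rw [hCc]; infer_instance
    have h2 : dEntropy (copulaOf ν) = entL ν ((fun u => Real.log (c u).toReal) ∘ D) := by
      have := dEntropy_withDensity (α := Fin d → ℝ) hc
      rw [hCc] at this
      rw [this, ← entL_map hD hLm, ← hCm]
    have hLi : ∀ i, Measurable fun t => Real.log (h i t).toReal := fun i => by fun_prop
    have h3 : ∀ i, dEntropy (δ i) = entL ν fun y => Real.log (h i (y i)).toReal := fun i => by
      have := dEntropy_withDensity (α := ℝ) (hh i)
      rw [← hδ i] at this
      rw [this, ← hν i, marg, entL_map (measurable_pi_apply i) (hLi i)]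
      rfl
    have hLogInt_joint : ∀ i, Integrable (fun y : Fin d → ℝ => Real.log (h i (y i)).toReal) ν := fun i => by
      have := hLogInt i
      rw [← hν i, marg] at this
      exact this.comp_measurable (measurable_pi_apply i)
    have hneg : ∫⁻ y, ENNReal.ofReal (-((fun u => Real.log (c u).toReal) ∘ D) y) ∂ν ≠ ⊤ := by
      have := lintegral_neg_log_ne_top (μ := (volume : Measure (Fin d → ℝ))) hc
        measurableSet_cube volume_cube_ne_top (by rw [hCc]; exact hCcube)
      rw [hCc, hCm, lintegral_map (by fun_prop) hD] at this
      exact this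
    rw [h1, h2]
    simp_rw [h3]
    rw [← entL_sum _ _ hLogInt_joint, ← entL_add (hLm.comp hD) (integrable_finsetSum _ fun i _ => hLogInt_joint i)
      hneg]
    refine entL_congr ?_
    filter_upwards [hne0, hnetop, hcD] with y ha hb hc'
    exact toReal_log_prod_mul _ _ ha hb hc'.1 hc'.2
  · rw [dEntropy_of_not_ac hC, EReal.bot_add]
    refine dEntropy_of_not_ac fun hac => hC ?_
    -- The density of `ν` vanishes wherever one of the marginal densities does.
    have hνpi : ν ≪ Measure.pi δ := by
      intro s hs
      rw [hpi, withDensity_apply_eq_zero hp] at hs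
      have h1 := hac hs
      have h2 : ∀ᵐ y ∂ν, ∏ i, h i (y i) ≠ 0 :=
        hne0.mono fun y hy => Finset.prod_ne_zero_iff.2 fun i _ => hy i
      have h3 : ∀ᵐ y ∂ν, y ∉ s := by
        filter_upwards [h2, measure_eq_zero_iff_ae_notMem.1 h1] with y hy hy' hys
        exact hy' ⟨hy, hys⟩
      exact measure_eq_zero_iff_ae_notMem.2 h3
    rw [hCm]
    refine (hνpi.map hD).trans ?_
    rw [hpiD, pi_uniform01]
    exact Measure.restrict_le_self.absolutelyContinuous

/-! ### Entropy of a symmetrization -/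

/-- Lebesgue almost every vector has pairwise distinct coordinates, as the hyperplanes
`x i = x j` are null. -/
lemma ae_injective : ∀ᵐ x : Fin d → ℝ, Function.Injective x := by
  have h : ∀ i j : Fin d, i ≠ j → ∀ᵐ x : Fin d → ℝ, x i ≠ x j := by
    intro i j hij
    let p : Submodule ℝ (Fin d → ℝ) :=
      LinearMap.ker (LinearMap.proj (R := ℝ) (φ := fun _ => ℝ) i - LinearMap.proj j)
    have hp : p ≠ ⊤ := by
      intro htop
      have : (Pi.single i 1 : Fin d → ℝ) ∈ p := htop ▸ Submodule.mem_top
      simp [p, LinearMap.mem_ker, Pi.single_eq_of_ne hij.symm] at this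
    have h0 := Measure.addHaar_submodule (volume : Measure (Fin d → ℝ)) p hp
    filter_upwards [measure_eq_zero_iff_ae_notMem.1 h0] with x hx he
    exact hx (by simp [p, LinearMap.mem_ker, he])
  have h' : ∀ᵐ x : Fin d → ℝ, ∀ i j : Fin d, i ≠ j → x i ≠ x j :=
    ae_all_iff.2 fun i => ae_all_iff.2 fun j => by
      by_cases hij : i = j
      · exact ae_of_all _ fun x hne => absurd hij hne
      · exact (h i j hij).mono fun x hx _ => hx
  filter_upwards [h'] with x hx i j hij
  by_contra hne
  exact hx i j hne hij

lemma measurableSet_strictMono : MeasurableSet {x : Fin d → ℝ | StrictMono x} := by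
  have : {x : Fin d → ℝ | StrictMono x} = ⋂ i, ⋂ j, ⋂ _ : i < j, {x | x i < x j} := by
    ext x; simp [StrictMono]
  rw [this]
  exact .iInter fun i => .iInter fun j => .iInter fun _ =>
    measurableSet_lt (measurable_pi_apply i) (measurable_pi_apply j)

lemma measurable_perm (π : Equiv.Perm (Fin d)) :
    Measurable fun (x : Fin d → ℝ) i => x (π i) := by fun_prop

lemma map_perm_volume (π : Equiv.Perm (Fin d)) :
    (volume : Measure (Fin d → ℝ)).map (fun x i => x (π i)) = volume := by
  have e : (fun (x : Fin d → ℝ) i => x (π i)) =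
      MeasurableEquiv.piCongrLeft (fun _ : Fin d => ℝ) π.symm := by
    funext x i
    have := Equiv.piCongrLeft_apply_apply (fun _ : Fin d => ℝ) π.symm x (π i)
    rw [Equiv.symm_apply_apply] at this
    exact this.symm
  rw [e]
  exact (volume_measurePreserving_piCongrLeft (fun _ : Fin d => ℝ) π.symm).map_eq

lemma map_perm_withDensity (π : Equiv.Perm (Fin d)) {g : (Fin d → ℝ) → ℝ≥0∞} (hg : Measurable g) :
    ((volume : Measure (Fin d → ℝ)).withDensity g).map (fun x i => x (π i)) =
      (volume : Measure (Fin d → ℝ)).withDensity fun x => g fun i => x (π⁻¹ i) := by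
  have h1 := map_withDensity_comp (volume : Measure (Fin d → ℝ)) (measurable_perm π)
    (c := fun x => g fun i => x (π⁻¹ i)) (by fun_prop)
  rw [map_perm_volume] at h1
  rw [← h1]
  congr 2
  ext x
  simp

lemma lintegral_symmetrize (ν : Measure (Fin d → ℝ)) {φ : (Fin d → ℝ) → ℝ≥0∞} (hφ : Measurable φ)
    (hs : ∀ (π : Equiv.Perm (Fin d)) x, φ (fun i => x (π i)) = φ x) :
    ∫⁻ x, φ x ∂symmetrize ν = ∫⁻ x, φ x ∂ν := by
  rw [symmetrize, lintegral_smul_measure, lintegral_finsetSum_measure]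
  simp_rw [lintegral_map hφ (measurable_perm _), hs]
  rw [Finset.sum_const, Finset.card_univ, Fintype.card_perm, Fintype.card_fin, smul_eq_mul,
    nsmul_eq_mul, ← mul_assoc, ENNReal.inv_mul_cancel (by simp [Nat.factorial_ne_zero]) (by simp),
    one_mul]

lemma absolutelyContinuous_symmetrize (ν : Measure (Fin d → ℝ)) : ν ≪ symmetrize ν := by
  intro s hs
  rw [symmetrize, Measure.smul_apply, smul_eq_mul, mul_eq_zero] at hs
  rcases hs with hs | hs
  · simp at hs
  · rw [Measure.finsetSum_apply, Finset.sum_eq_zero_iff] at hs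
    have := hs 1 (Finset.mem_univ _)
    simpa using! this

/-- Symmetrizing a law on the cube supported by ordered vectors adds `log d!` to the entropy: the
permuted copies of the density have disjoint supports, so that on ordered vectors the density is
divided by `d!`. -/
lemma dEntropy_symmetrize (ν : Measure (Fin d → ℝ)) [IsProbabilityMeasure ν]
    (hmono : ∀ᵐ x ∂ν, Monotone x)
    (hcube : ν (univ.pi fun _ : Fin d => Icc (0 : ℝ) 1)ᶜ = 0) :
    dEntropy (symmetrize ν) = ((Real.log (d.factorial : ℝ)) : EReal) + dEntropy ν := by
  by_cases hac : ν ≪ (volume : Measure (Fin d → ℝ))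
  swap
  · rw [dEntropy_of_not_ac hac, EReal.add_bot]
    exact dEntropy_of_not_ac fun h => hac ((absolutelyContinuous_symmetrize ν).trans h)
  set T := {x : Fin d → ℝ | StrictMono x} with hT
  have hTm : MeasurableSet T := measurableSet_strictMono
  have hνT : ∀ᵐ x ∂ν, x ∈ T := by
    filter_upwards [hmono, hac.ae_le ae_injective] with x h1 h2
    exact h1.strictMono_of_injective h2
  set g := T.indicator (ν.rnDeriv volume) with hgdef
  have hg : Measurable g := (Measure.measurable_rnDeriv _ _).indicator hTm
  have hνg : (volume : Measure (Fin d → ℝ)).withDensity g = ν := by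
    rw [hgdef, withDensity_indicator hTm, ← restrict_withDensity hTm,
      Measure.withDensity_rnDeriv_eq _ _ hac]
    exact Measure.restrict_eq_self_of_ae_mem hνT
  have hgfin : IsFiniteMeasure ((volume : Measure (Fin d → ℝ)).withDensity g) := by
    rw [hνg]; infer_instance
  set s : (Fin d → ℝ) → ℝ≥0∞ :=
    fun x => (d.factorial : ℝ≥0∞)⁻¹ * ∑ π : Equiv.Perm (Fin d), g fun i => x (π i) with hsdef
  have hs : Measurable s := by fun_prop
  have hsym : ∀ (π : Equiv.Perm (Fin d)) x, s (fun i => x (π i)) = s x := by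
    intro π x
    simp only [hsdef]
    congr 1
    exact Fintype.sum_equiv (Equiv.mulLeft π) _ _ fun σ => rfl
  have hSs : (volume : Measure (Fin d → ℝ)).withDensity s = symmetrize ν := by
    have e : s = (d.factorial : ℝ≥0∞)⁻¹ •
        ∑ π : Equiv.Perm (Fin d), fun x : Fin d → ℝ => g fun i => x (π i) := by
      ext x; simp [hsdef]
    rw [e, withDensity_smul _ (by fun_prop), symmetrize]
    congr 1
    rw [← Fintype.sum_equiv (Equiv.inv (Equiv.Perm (Fin d)))
      (fun π => fun x : Fin d → ℝ => g fun i => x (π⁻¹ i)) _ fun π => rfl]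
    have : ∀ t : Finset (Equiv.Perm (Fin d)), (volume : Measure (Fin d → ℝ)).withDensity
        (∑ π ∈ t, fun x : Fin d → ℝ => g fun i => x (π⁻¹ i)) =
        ∑ π ∈ t, ν.map fun x i => x (π i) := by
      intro t
      induction t using Finset.cons_induction with
      | empty => simp
      | cons a t ha ih =>
        rw [Finset.sum_cons, Finset.sum_cons, withDensity_add_left (by fun_prop), ih,
          ← map_perm_withDensity a hg, hνg]
    exact this _
  have hfac0 : (d.factorial : ℝ≥0∞) ≠ 0 := by simp [Nat.factorial_ne_zero]
  have hSfin : IsFiniteMeasure ((volume : Measure (Fin d → ℝ)).withDensity s) := by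
    refine ⟨?_⟩
    rw [hSs, ← lintegral_one, lintegral_symmetrize ν measurable_const fun _ _ => rfl]
    simp
  -- `log s` is invariant under permutations: its expectation is the same under `ν` and its
  -- symmetrization.
  have h1 : dEntropy (symmetrize ν) = entL ν fun x => Real.log (s x).toReal := by
    have := dEntropy_withDensity (α := Fin d → ℝ) hs
    rw [hSs] at this
    rw [this, entL, lintegral_symmetrize ν (by fun_prop) (fun π x => by rw [hsym]),
      lintegral_symmetrize ν (by fun_prop) (fun π x => by rw [hsym])]
    rfl
  have h2 : dEntropy ν = entL ν fun x => Real.log (g x).toReal := by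
    have := dEntropy_withDensity (α := Fin d → ℝ) hg
    rwa [hνg] at this
  have hsT : ∀ x ∈ T, s x = (d.factorial : ℝ≥0∞)⁻¹ * g x := by
    intro x hx
    simp only [hsdef]
    congr 1
    rw [Finset.sum_eq_single (1 : Equiv.Perm (Fin d))]
    · rfl
    · intro π _ hπ
      refine indicator_of_notMem (fun hmem => hπ ?_) _
      -- The identity is the only increasing permutation.
      have hπm : StrictMono π := fun i j hij => hx.lt_iff_lt.1 (hmem hij)
      ext1 i
      exact congrFun ((hπm.range_inj strictMono_id).1
        (by rw [π.surjective.range_eq]; simp)) i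
    · simp
  have hneg := lintegral_neg_log_ne_top (μ := (volume : Measure (Fin d → ℝ))) hg
        measurableSet_cube volume_cube_ne_top (by rw [hνg]; exact hcube)
  rw [hνg] at hneg
  have h3 : entL ν (fun x => Real.log (s x).toReal) =
      entL ν fun x => Real.log (g x).toReal + -Real.log (d.factorial : ℝ) := by
    refine entL_congr ?_
    have ha := ae_withDensity_ne_zero (volume : Measure (Fin d → ℝ)) hg
    have hb := (withDensity_absolutelyContinuous (volume : Measure (Fin d → ℝ)) g).ae_le
      (ae_withDensity_ne_top (volume : Measure (Fin d → ℝ)) hg)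
    rw [hνg] at ha hb
    filter_upwards [ha, hb, hνT] with x hx1 hx2 hx3
    rw [hsT x hx3, ENNReal.toReal_mul, Real.log_mul _ (ENNReal.toReal_pos hx1 hx2).ne',
      ENNReal.toReal_inv, ENNReal.toReal_natCast, Real.log_inv, add_comm]
    simp [Nat.factorial_ne_zero]
  rw [h1, h2, h3, entL_add (by fun_prop) (integrable_const _) hneg, add_comm,
    entL_of_integrable (integrable_const _)]
  simp

/-! ### The averaged cdf and the multidiagonal -/

/-- The average measure, whose cdf is `Gbar F`. -/
def avgMeasure (F : Fin d → Measure ℝ) : Measure ℝ := (d : ℝ≥0∞)⁻¹ • ∑ i, F i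

lemma avgMeasure_apply (F : Fin d → Measure ℝ) (s : Set ℝ) :
    avgMeasure F s = (d : ℝ≥0∞)⁻¹ * ∑ i, F i s := by
  rw [avgMeasure, Measure.smul_apply, Measure.finsetSum_apply, smul_eq_mul]

lemma le_mul_avgMeasure [NeZero d] (F : Fin d → Measure ℝ) (i : Fin d) (s : Set ℝ) :
    F i s ≤ d * avgMeasure F s := by
  rw [avgMeasure_apply, ← mul_assoc,
    ENNReal.mul_inv_cancel (by simp [NeZero.ne d]) (by simp), one_mul]
  exact Finset.single_le_sum (f := fun i => F i s) (fun _ _ => bot_le) (Finset.mem_univ i)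

instance avgMeasure_prob [NeZero d] (F : Fin d → Measure ℝ) [∀ i, IsProbabilityMeasure (F i)] :
    IsProbabilityMeasure (avgMeasure F) := ⟨by
  rw [avgMeasure_apply]
  simp [ENNReal.inv_mul_cancel, NeZero.ne d]⟩

lemma cdf1_avgMeasure (F : Fin d → Measure ℝ) [∀ i, IsProbabilityMeasure (F i)] :
    cdf1 (avgMeasure F) = Gbar F := by
  ext t
  rw [cdf1, avgMeasure_apply, ENNReal.toReal_mul, ENNReal.toReal_sum fun i _ => measure_ne_top _ _,
    Gbar, ENNReal.toReal_inv, ENNReal.toReal_natCast, inv_mul_eq_div]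
  rfl

/-- Each index is taken equally often as the value of a permutation at a given point. -/
lemma mul_sum_perm (a : Fin d → ℝ≥0∞) (i : Fin d) :
    (d : ℝ≥0∞) * ∑ π : Equiv.Perm (Fin d), a (π i) = d.factorial * ∑ j, a j := by
  have h1 : ∀ j, ∑ π : Equiv.Perm (Fin d), a (π j) = ∑ π : Equiv.Perm (Fin d), a (π i) := fun j =>
    Fintype.sum_equiv (Equiv.mulRight (Equiv.swap i j)) _ _ fun π => by simp
  have h2 : ∑ j, ∑ π : Equiv.Perm (Fin d), a (π j) = d.factorial * ∑ j, a j := by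
    rw [Finset.sum_comm]
    simp_rw [fun π : Equiv.Perm (Fin d) => Equiv.sum_comp π a]
    simp [Fintype.card_perm]
  rw [← h2]
  simp_rw [h1]
  simp

/-- All marginals of the symmetrized law are equal to the average of the original marginals. -/
lemma marg_symmetrize [NeZero d] (F : Fin d → Measure ℝ) (μ : Measure (Fin d → ℝ))
    (hμ : ∀ i, marg μ i = F i) (i : Fin d) : marg (symmetrize μ) i = avgMeasure F := by
  ext s hs
  have h1 : marg (symmetrize μ) i s =
      (d.factorial : ℝ≥0∞)⁻¹ * ∑ π : Equiv.Perm (Fin d), F (π i) s := by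
    rw [marg, Measure.map_apply (measurable_pi_apply i) hs, symmetrize, Measure.smul_apply,
      Measure.finsetSum_apply, smul_eq_mul]
    congr 1
    refine Finset.sum_congr rfl fun π _ => ?_
    rw [Measure.map_apply (measurable_perm π) (measurable_pi_apply i hs), ← hμ (π i), marg,
      Measure.map_apply (measurable_pi_apply (π i)) hs]
    rfl
  have h2 := mul_sum_perm (fun j => F j s) i
  have hd0 : (d : ℝ≥0∞) ≠ 0 := by simp [NeZero.ne d]
  have hf0 : (d.factorial : ℝ≥0∞) ≠ 0 := by simp [Nat.factorial_ne_zero]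
  rw [h1, avgMeasure_apply]
  calc _ = (d.factorial : ℝ≥0∞)⁻¹ * (((d : ℝ≥0∞)⁻¹ * d) *
          ∑ π : Equiv.Perm (Fin d), F (π i) s) := by
        rw [ENNReal.inv_mul_cancel hd0 (by simp), one_mul]
    _ = (d.factorial : ℝ≥0∞)⁻¹ * d.factorial * ((d : ℝ≥0∞)⁻¹ * ∑ j, F j s) := by
        rw [mul_assoc (d : ℝ≥0∞)⁻¹, h2]; ring
    _ = _ := by rw [ENNReal.inv_mul_cancel hf0 (by simp), one_mul]

lemma map_symmetrize (μ : Measure (Fin d → ℝ)) {g : ℝ → ℝ} (hg : Measurable g) :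
    (symmetrize μ).map (fun x i => g (x i)) = symmetrize (μ.map fun x i => g (x i)) := by
  have hG : Measurable fun (x : Fin d → ℝ) i => g (x i) := by fun_prop
  rw [symmetrize, symmetrize, Measure.map_smul, Measure.map_finset_sum hG.aemeasurable]
  congr 1
  refine Finset.sum_congr rfl fun π _ => ?_
  rw [Measure.map_map hG (measurable_perm π), Measure.map_map (measurable_perm π) hG]
  rfl

lemma measurable_Gbar (F : Fin d → Measure ℝ) [∀ i, IsProbabilityMeasure (F i)] [NeZero d] :
    Measurable (Gbar F) := by
  rw [← cdf1_avgMeasure]; exact measurable_cdf1 _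

lemma avgMeasure_singleton (F : Fin d → Measure ℝ) (hat : ∀ i t, F i {t} = 0) (t : ℝ) :
    avgMeasure F {t} = 0 := by
  rw [avgMeasure_apply]; simp [hat]

/-- The measure `δ_(i)` has density at most `d` on `[0,1]`, because `F_i ≤ d • avgMeasure F` and
`avgMeasure F` is mapped to the uniform law by its cdf `G`. -/
lemma mdiagF_le [NeZero d] (F : Fin d → Measure ℝ) [∀ i, IsProbabilityMeasure (F i)]
    (hat : ∀ i t, F i {t} = 0) (i : Fin d) {s : Set ℝ} (hs : MeasurableSet s) :
    mdiagF F i s ≤ d * uniform01 s := by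
  rw [mdiagF, Measure.map_apply (measurable_Gbar F) hs,
    ← map_cdf1 (avgMeasure F) (avgMeasure_singleton F hat),
    Measure.map_apply (measurable_cdf1 _) hs, cdf1_avgMeasure]
  exact le_mul_avgMeasure F i _

/-- `δ_(i) ∘ G = F_i`: the measure `F_i` does not charge the flat pieces of `G`. -/
lemma cdf1_mdiagF [NeZero d] (F : Fin d → Measure ℝ) [∀ i, IsProbabilityMeasure (F i)]
    (hat : ∀ i t, F i {t} = 0) (i : Fin d) (t : ℝ) :
    cdf1 (mdiagF F i) (Gbar F t) = cdf1 (F i) t := by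
  have hGm := measurable_Gbar F
  have hmono : Monotone (Gbar F) := by rw [← cdf1_avgMeasure]; exact cdf1_mono _
  unfold cdf1
  rw [mdiagF, Measure.map_apply hGm measurableSet_Iic]
  congr 1
  set A := Gbar F ⁻¹' Iic (Gbar F t) with hA
  have hsub : Iic t ⊆ A := fun s hs => hmono hs
  -- Both sides are equal to `G t`, since `G` maps `avgMeasure F` to the uniform law.
  have hval : avgMeasure F A = avgMeasure F (Iic t) := by
    have h1 := map_cdf1 (avgMeasure F) (avgMeasure_singleton F hat)
    have h2 : (avgMeasure F).map (cdf1 (avgMeasure F)) (Iic (Gbar F t)) = avgMeasure F A := by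
      rw [Measure.map_apply (measurable_cdf1 _) measurableSet_Iic, cdf1_avgMeasure]
    rw [← h2, h1, ← ofReal_cdf1 (avgMeasure F), cdf1_avgMeasure, uniform01,
      Measure.restrict_apply measurableSet_Iic]
    have h3 : Gbar F t ≤ 1 := by rw [← cdf1_avgMeasure]; exact cdf1_le_one _ _
    have e : Iic (Gbar F t) ∩ Icc (0 : ℝ) 1 = Icc 0 (Gbar F t) := by
      ext x
      simp only [mem_inter_iff, mem_Iic, mem_Icc]
      exact ⟨fun h => ⟨h.2.1, h.1⟩, fun h => ⟨h.2, h.1, h.2.trans h3⟩⟩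
    rw [e, Real.volume_Icc, sub_zero]
  have hdiff : avgMeasure F (A \ Iic t) = 0 := by
    rw [measure_sdiff hsub measurableSet_Iic.nullMeasurableSet (measure_ne_top _ _), hval,
      tsub_self]
  have hdiff' : F i (A \ Iic t) = 0 :=
    le_antisymm ((le_mul_avgMeasure F i _).trans (by rw [hdiff, mul_zero])) bot_le
  refine le_antisymm ?_ (measure_mono hsub)
  calc F i A ≤ F i (Iic t ∪ (A \ Iic t)) := measure_mono (by
        rw [union_sdiff_self]; exact subset_union_right)
    _ ≤ F i (Iic t) + F i (A \ Iic t) := measure_union_le _ _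
    _ = _ := by rw [hdiff', add_zero]

/-- Proposition `prop:H(C)_H(SFC)`.  Let `F = (F_1, …, F_d)` be a `d`-tuple
of continuous cdfs on `ℝ` with `F_{i-1} ≥ F_i` pointwise, and let `C ∈ C^OS(F)`.  Then
`H(S_F(C)) = log(d!) + H(C) + ∑_{i=1}^d H(δ^F_(i))`, where `δ^F_(i) = F_i ∘ G^{-1}` (the law
of `G(X_i)` with `X_i ∼ F_i`) and `G = (1/d) ∑_{i=1}^d F_i`. -/
theorem stmt_9 {d : ℕ} [NeZero d] (F : Fin d → Measure ℝ) (hF : IsMargOS F)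
    (C : Measure (Fin d → ℝ)) (hC : C ∈ copulaOS F) :
    dEntropy (SF F C) = ((Real.log (d.factorial : ℝ)) : EReal) + dEntropy C
      + ∑ i : Fin d, dEntropy (mdiagF F i) := by
  obtain ⟨μ, ⟨hμp, hμm, hμF⟩, rfl⟩ := hC
  have hprob := hF.prob
  have hat := hF.cont
  have hGm := measurable_Gbar F
  have hGmono : Monotone (Gbar F) := by rw [← cdf1_avgMeasure]; exact cdf1_mono _
  have hGv : Measurable fun (x : Fin d → ℝ) i => Gbar F (x i) := by fun_prop
  have hCm : copulaOf μ = μ.map fun x i => cdf1 (F i) (x i) := by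
    unfold copulaOf; simp_rw [hμF]
  have hjoin : joinCopula F (copulaOf μ) = μ := by
    rw [hCm]
    exact joinCopula_map F hat μ fun i => (hμF i).absolutelyContinuous
  -- The law of `(G(X_1), …, G(X_d))`.
  set ν := μ.map fun (x : Fin d → ℝ) i => Gbar F (x i) with hνdef
  have hSF : SF F (copulaOf μ) = symmetrize ν := by
    rw [SF, hjoin, copulaOf]
    simp_rw [marg_symmetrize F μ hμF, cdf1_avgMeasure]
    exact map_symmetrize μ hGm
  have hνp : IsProbabilityMeasure ν := Measure.isProbabilityMeasure_map hGv.aemeasurable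
  have hνmarg : ∀ i, marg ν i = mdiagF F i := fun i => by
    rw [hνdef, marg_map (fun _ => Gbar F) fun _ => hGm, hμF i]; rfl
  have hνC : copulaOf ν = copulaOf μ := by
    have hδp : ∀ i, IsProbabilityMeasure (mdiagF F i) := fun i =>
      Measure.isProbabilityMeasure_map hGm.aemeasurable
    rw [hCm, copulaOf]
    simp_rw [hνmarg]
    rw [hνdef, Measure.map_map (measurable_cdfs (mdiagF F)) hGv]
    congr 1
    funext x i
    exact cdf1_mdiagF F hat i (x i)
  have hδp : ∀ i, IsProbabilityMeasure (mdiagF F i) := fun i =>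
    Measure.isProbabilityMeasure_map hGm.aemeasurable
  have hδac : ∀ i, mdiagF F i ≪ (volume : Measure ℝ) := fun i =>
    Measure.AbsolutelyContinuous.mk fun s hs h0 => by
      refine le_antisymm ((mdiagF_le F hat i hs).trans ?_) bot_le
      have : uniform01 s = 0 := le_antisymm ((Measure.restrict_apply_le _ _).trans h0.le) bot_le
      rw [this, mul_zero]
  have hδ01 : ∀ i, mdiagF F i (Icc 0 1)ᶜ = 0 := fun i => by
    refine le_antisymm ((mdiagF_le F hat i measurableSet_Icc.compl).trans ?_) bot_le
    rw [uniform01_compl, mul_zero]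
  have hνmono : ∀ᵐ x ∂ν, Monotone x := by
    have hmm : MeasurableSet {x : Fin d → ℝ | Monotone x} := by
      have : {x : Fin d → ℝ | Monotone x} = ⋂ i, ⋂ j, ⋂ _ : i ≤ j, {x | x i ≤ x j} := by
        ext x; simp [Monotone]
      rw [this]
      exact .iInter fun i => .iInter fun j => .iInter fun _ =>
        measurableSet_le (measurable_pi_apply i) (measurable_pi_apply j)
    rw [hνdef, ae_map_iff hGv.aemeasurable hmm]
    have : ∀ᵐ x ∂μ, Monotone x := (prob_compl_eq_zero_iff hmm).2 hμm
    exact this.mono fun x hx i j hij => hGmono (hx hij)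
  have hνcube := cube_compl_null ν fun i => by rw [hνmarg i]; exact hδ01 i
  have hdens : ∀ i, mdiagF F i =
      (volume : Measure ℝ).withDensity ((mdiagF F i).rnDeriv volume) := fun i =>
    (Measure.withDensity_rnDeriv_eq _ _ (hδac i)).symm
  have hbound : ∀ i, ∀ᵐ t : ℝ, (mdiagF F i).rnDeriv volume t ≤ d := fun i => by
    refine ae_le_of_forall_setLIntegral_le_of_sigmaFinite (g := fun _ => (d : ℝ≥0∞))
      (Measure.measurable_rnDeriv _ _) fun s hs _ => ?_
    refine (Measure.setLIntegral_rnDeriv_le s).trans ((mdiagF_le F hat i hs).trans ?_)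
    rw [setLIntegral_const]
    gcongr
    exact Measure.restrict_le_self
  have hLogInt : ∀ i, Integrable (fun t => Real.log ((mdiagF F i).rnDeriv volume t).toReal)
      (mdiagF F i) := fun i => by
    refine integrable_of_lintegral (by fun_prop) ?_ ?_
    · refine ne_top_of_le_ne_top (b := ENNReal.ofReal d) ENNReal.ofReal_ne_top ?_
      calc _ ≤ ∫⁻ _, ENNReal.ofReal d ∂mdiagF F i := by
            have hb : ∀ᵐ t ∂mdiagF F i, (mdiagF F i).rnDeriv volume t ≤ d :=
              (hδac i).ae_le (hbound i)
            refine lintegral_mono_ae (hb.mono fun t ht => ?_)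
            refine ENNReal.ofReal_le_ofReal ((Real.log_le_self ENNReal.toReal_nonneg).trans ?_)
            simpa using ENNReal.toReal_mono (by simp) ht
        _ = _ := by simp
    · have hfin : IsFiniteMeasure
          ((volume : Measure ℝ).withDensity ((mdiagF F i).rnDeriv volume)) := by
        rw [← hdens i]; infer_instance
      have := lintegral_neg_log_ne_top (μ := (volume : Measure ℝ))
        (f := (mdiagF F i).rnDeriv volume) (Measure.measurable_rnDeriv _ _)
        (K := Icc 0 1) measurableSet_Icc (by simp) (by rw [← hdens i]; exact hδ01 i)
      rwa [← hdens i] at this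
  rw [hSF, dEntropy_symmetrize ν hνmono hνcube,
    dEntropy_sklar (mdiagF F) (fun i => (mdiagF F i).rnDeriv volume)
      (fun i => Measure.measurable_rnDeriv _ _) hdens hLogInt ν hνmarg, hνC, add_assoc]

end MaxEntOS
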